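/- arXiv:1602.08643 — 2 statements merged into one kernel-verified Lean document; each statement's English description precedes it below -/
import Mathlib

section
/- For every A ∈ ℝ the coarse-grained defect-formation free energy G_N^cg(A) is well-defined (both one-dimensional integrals are finite and positive), and there exists a constant C > 0 such that |G_N^cg(A) − G_∞(A)| ≤ C/N for all integers N ≥ 2, where G_∞(A) = −log( (∫_ℝ exp(−(ψ+P)(y) + W'(A)·y) dy) / (∫_ℝ exp(−ψ(y) + W'(A)·y) dy) ). -/
/-!
The strain energy `W` is the Legendre transform of `Λ(σ) = log ∫ exp (-ψ y + σ y) dy`. Since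
`ψ'' ≤ κ₂`, the function `Λ` is strongly convex with constant `1 / κ₂` (`log_tiltZ_ge`), its
derivative, the mean of the tilted Gibbs measure, takes every real value (`tiltMean_surjective`),
and by duality `W` satisfies `0 ≤ W (A + h) - W A - s h ≤ κ₂ h² / 2` with `s = W' (A)`
(`W_sandwich`).

The supporting lines of `W` give Jensen's inequality, so the minimal chain has equal increments and
`E_N(A, y) = (N - 1) (W (A + (A - y) / (N - 1)) - W A)` (`EcgN_eq`). The sandwich then yields
`0 ≤ E_N(A, y) - W'(A) (A - y) ≤ κ₂ (A - y)² / (2 (N - 1))`. Up to the factor `exp (-W'(A) A)`,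
which cancels in the quotient, each integral defining `G_N` thus differs from its limit by at most
a second moment divided by `N - 1`, and is bounded below uniformly in `N`; taking logarithms gives
the rate (`log_integral_rate`). Strong convexity of `ψ` and `ψ + P` makes the moments finite.
-/

noncomputable section

open MeasureTheory Real Filter

/-- The Cauchy–Born strain energy `W(A)`. -/
def W (ψ : ℝ → ℝ) (A : ℝ) : ℝ :=
  ⨆ σ : ℝ, (σ * A - Real.log (∫ y : ℝ, Real.exp (-ψ y + σ * y)))

/-- The finite-domain coarse-grained energy
`E_N^cg(A,y) = inf { ∑_{i=2}^N [Wf(u_i - u_{i-1}) - Wf(A)] : u₁ = y, u_N = N A }`. -/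
def EcgN (Wf : ℝ → ℝ) (N : ℕ) (A y : ℝ) : ℝ :=
  sInf { E : ℝ | ∃ u : ℕ → ℝ, u 1 = y ∧ u N = N * A ∧
    E = ∑ i ∈ Finset.Icc 2 N, (Wf (u i - u (i - 1)) - Wf A) }

/-- The coarse-grained defect-formation free energy `G_N^cg(A)`. -/
def GNcg (ψ P : ℝ → ℝ) (N : ℕ) (A : ℝ) : ℝ :=
  - Real.log
      ((∫ y : ℝ, Real.exp (-P y - ψ y - EcgN (W ψ) N A y)) /
       (∫ y : ℝ, Real.exp (-ψ y - EcgN (W ψ) N A y)))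

/-! ### Quadratic bounds and Gaussian integrability -/

lemma tangent_le {f f' : ℝ → ℝ} (hf : ∀ x, HasDerivAt f (f' x) x) (hm : Monotone f') (z t : ℝ) :
    f z + f' z * t ≤ f (z + t) := by
  have hconv : ConvexOn ℝ Set.univ f := by
    apply MonotoneOn.convexOn_of_deriv convex_univ
    · exact fun x _ => (hf x).continuousAt.continuousWithinAt
    · exact fun x _ => (hf x).differentiableAt.differentiableWithinAt
    · intro x _ y _ hxy
      rw [(hf x).deriv, (hf y).deriv]
      exact hm hxy
  rcases lt_trichotomy t 0 with ht | ht | ht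
  · have := hconv.slope_le_of_hasDerivAt (Set.mem_univ (z + t)) (Set.mem_univ z)
      (by linarith) (hf z)
    rw [slope_def_field, div_le_iff₀ (by linarith)] at this
    linarith
  · simp [ht]
  · have := hconv.le_slope_of_hasDerivAt (Set.mem_univ z) (Set.mem_univ (z + t))
      (by linarith) (hf z)
    rw [slope_def_field, le_div_iff₀ (by linarith)] at this
    linarith

lemma quad_lower {f : ℝ → ℝ} {k : ℝ} (hf : ContDiff ℝ 2 f) (hk : ∀ y, k ≤ deriv (deriv f) y)
    (z t : ℝ) : f z + deriv f z * t + k / 2 * t ^ 2 ≤ f (z + t) := by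
  have h1 : Differentiable ℝ f := hf.differentiable (by norm_num)
  have h2 : Differentiable ℝ (deriv f) :=
    (hf.iterate_deriv' 1 1).differentiable (by norm_num)
  have hd : ∀ x, HasDerivAt (fun x => f x - k / 2 * x ^ 2) (deriv f x - k * x) x := by
    intro x
    have := (h1 x).hasDerivAt.fun_sub ((hasDerivAt_pow 2 x).const_mul (k / 2))
    refine this.congr_deriv ?_
    push_cast
    ring
  have hm : Monotone (fun x => deriv f x - k * x) := by
    have hd' : ∀ x, HasDerivAt (fun x => deriv f x - k * x) (deriv (deriv f) x - k) x := by
      intro x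
      simpa using (h2 x).hasDerivAt.fun_sub ((hasDerivAt_id x).const_mul k)
    apply monotone_of_deriv_nonneg (fun x => (hd' x).differentiableAt)
    intro x
    rw [(hd' x).deriv]
    linarith [hk x]
  have := tangent_le hd hm z t
  nlinarith

lemma quad_upper {f : ℝ → ℝ} {k : ℝ} (hf : ContDiff ℝ 2 f) (hk : ∀ y, deriv (deriv f) y ≤ k)
    (z t : ℝ) : f (z + t) ≤ f z + deriv f z * t + k / 2 * t ^ 2 := by
  have hd1 : deriv (fun x => -f x) = fun x => -deriv f x := by
    ext x; exact deriv.fun_neg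
  have := quad_lower (f := fun x => -f x) (k := -k) hf.neg (fun y => by
    rw [hd1, deriv.fun_neg]; linarith [hk y]) z t
  rw [hd1] at this
  linarith

/-- Strong convexity of `V` makes the second moment of every tilt of `exp (-V)` finite. -/
lemma integrable_weight {V : ℝ → ℝ} {k : ℝ} (hk : 0 < k) (hV : ContDiff ℝ 2 V)
    (hV2 : ∀ y, k ≤ deriv (deriv V) y) (σ : ℝ) :
    Integrable (fun y : ℝ => (1 + y ^ 2) * exp (-V y + σ * y)) := by
  have hg : Integrable (fun y : ℝ => (1 + y ^ 2) * exp (-(k / 4) * y ^ 2)) := by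
    have h0 := integrable_exp_neg_mul_sq (b := k / 4) (by positivity)
    have h2 := integrable_rpow_mul_exp_neg_mul_sq (b := k / 4) (by positivity) (s := 2)
      (by norm_num)
    refine (h0.add h2).congr (Eventually.of_forall fun y => ?_)
    simp only [Pi.add_apply, rpow_two]
    ring
  have hVc := hV.continuous
  set b := σ - deriv V 0
  refine (hg.const_mul (exp (-V 0 + b ^ 2 / k))).mono' (by fun_prop)
    (Eventually.of_forall fun y => ?_)
  rw [norm_of_nonneg (by positivity), mul_left_comm, ← exp_add]
  refine mul_le_mul_of_nonneg_left (exp_le_exp.2 ?_) (by positivity)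
  have h := quad_lower hV hV2 0 y
  rw [zero_add] at h
  -- completing the square: `b y ≤ k y² / 4 + b² / k`
  have hsq : b * y ≤ k / 4 * y ^ 2 + b ^ 2 / k := by
    have : 0 ≤ (k * y / 2 - b) ^ 2 / k := by positivity
    have e : (k * y / 2 - b) ^ 2 / k = k / 4 * y ^ 2 + b ^ 2 / k - b * y := by
      field_simp
      ring
    linarith
  have hb : b * y = σ * y - deriv V 0 * y := by simp only [b]; ring
  linarith

lemma integrable_of_le_weight {V g : ℝ → ℝ} {σ c : ℝ} (hV : Continuous V) (hg : Continuous g)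
    (hI : Integrable (fun y : ℝ => (1 + y ^ 2) * exp (-V y + σ * y)))
    (hle : ∀ y, |g y| ≤ c * (1 + y ^ 2)) :
    Integrable (fun y : ℝ => g y * exp (-V y + σ * y)) := by
  refine (hI.const_mul c).mono' (by fun_prop) (Eventually.of_forall fun y => ?_)
  rw [norm_mul, norm_of_nonneg (exp_pos _).le, ← mul_assoc]
  exact mul_le_mul_of_nonneg_right (hle y) (exp_pos _).le

lemma continuous_tilt {V g : ℝ → ℝ} (hV : Continuous V) (hg : Continuous g)
    (hI : ∀ σ, Integrable (fun y : ℝ => (1 + y ^ 2) * exp (-V y + σ * y)))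
    (hle : ∀ y, |g y| ≤ 1 + y ^ 2) :
    Continuous (fun σ => ∫ y, g y * exp (-V y + σ * y)) := by
  rw [continuous_iff_continuousAt]
  intro σ
  refine continuousAt_of_dominated (bound := fun y => (1 + y ^ 2) * exp (-V y + (σ + 1) * y) +
    (1 + y ^ 2) * exp (-V y + (σ - 1) * y)) (Eventually.of_forall fun τ => by fun_prop) ?_
    ((hI _).add (hI _)) (Eventually.of_forall fun y => by fun_prop)
  filter_upwards [Metric.ball_mem_nhds σ one_pos] with τ hτ
  rw [Metric.mem_ball, dist_eq, abs_lt] at hτ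
  refine Eventually.of_forall fun y => ?_
  rw [norm_mul, norm_of_nonneg (exp_pos _).le, ← mul_add]
  refine mul_le_mul (hle y) ?_ (exp_pos _).le (by positivity)
  rcases le_total 0 y with hy | hy
  · have : exp (-V y + τ * y) ≤ exp (-V y + (σ + 1) * y) := by
      apply exp_le_exp.2; nlinarith
    linarith [exp_pos (-V y + (σ - 1) * y)]
  · have : exp (-V y + τ * y) ≤ exp (-V y + (σ - 1) * y) := by
      apply exp_le_exp.2; nlinarith
    linarith [exp_pos (-V y + (σ + 1) * y)]

lemma abs_le_weight (y : ℝ) : |y| ≤ 1 + y ^ 2 := by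
  rw [← sq_abs]; nlinarith [sq_nonneg (|y| - 1), abs_nonneg y]

/-! ### Tilted partition function and mean -/

/-- The partition function of the potential `ψ` tilted by the force `σ`. -/
def tiltZ (ψ : ℝ → ℝ) (σ : ℝ) : ℝ := ∫ y : ℝ, exp (-ψ y + σ * y)

/-- The mean of the Gibbs measure of the potential `ψ` tilted by the force `σ`. -/
def tiltMean (ψ : ℝ → ℝ) (σ : ℝ) : ℝ := (∫ y : ℝ, y * exp (-ψ y + σ * y)) / tiltZ ψ σ

lemma integral_pos_of_pos {f : ℝ → ℝ} (hf : Integrable f) (hpos : ∀ y, 0 < f y) :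
    0 < ∫ y, f y := by
  rw [integral_pos_iff_support_of_nonneg (fun y => (hpos y).le) hf]
  have : Function.support f = Set.univ := by
    ext y; simp [(hpos y).ne']
  simp [this]

section
variable {ψ : ℝ → ℝ} {κ₁ κ₂ : ℝ}

lemma integrable_tilt (hκ₁ : 0 < κ₁) (hψ : ContDiff ℝ 2 ψ) (h1 : ∀ y, κ₁ ≤ deriv (deriv ψ) y)
    (σ : ℝ) : Integrable (fun y => exp (-ψ y + σ * y)) := by
  have := integrable_of_le_weight (g := fun _ => 1) (c := 1) hψ.continuous continuous_const
    (integrable_weight hκ₁ hψ h1 σ) (fun y => by rw [abs_one]; nlinarith [sq_nonneg y])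
  simpa using this

lemma tiltZ_pos (hκ₁ : 0 < κ₁) (hψ : ContDiff ℝ 2 ψ) (h1 : ∀ y, κ₁ ≤ deriv (deriv ψ) y)
    (σ : ℝ) : 0 < tiltZ ψ σ :=
  integral_pos_of_pos (integrable_tilt hκ₁ hψ h1 σ) (fun _ => exp_pos _)

/-- Strong convexity of the log-partition function, with the quadratic term `τ² / (2 κ₂)` written
as the supremum over `t` of `τ t - κ₂ t² / 2`. The parameter `t` is a shift of the integration
variable; the bound then follows from Taylor's inequality for `ψ`, Jensen's inequality for `exp`,
and the vanishing of the mean of `ψ' - σ` (integration by parts). -/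
lemma log_tiltZ_ge (hκ₁ : 0 < κ₁) (hψ : ContDiff ℝ 2 ψ)
    (h1 : ∀ y, κ₁ ≤ deriv (deriv ψ) y) (h2 : ∀ y, deriv (deriv ψ) y ≤ κ₂) (σ τ t : ℝ) :
    log (tiltZ ψ σ) + τ * tiltMean ψ σ + τ * t - κ₂ / 2 * t ^ 2 ≤ log (tiltZ ψ (σ + τ)) := by
  have hZ := tiltZ_pos hκ₁ hψ h1 σ
  have hI := integrable_tilt hκ₁ hψ h1 σ
  have hw := integrable_weight hκ₁ hψ h1 σ
  have hψc := hψ.continuous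
  have hd : Differentiable ℝ ψ := hψ.differentiable (by norm_num)
  have hd2 : Differentiable ℝ (deriv ψ) :=
    (hψ.iterate_deriv' 1 1).differentiable (by norm_num)
  have hIy : Integrable (fun y => y * exp (-ψ y + σ * y)) :=
    integrable_of_le_weight (g := fun y => y) (c := 1) hψc continuous_id hw
      (fun y => by rw [one_mul]; exact abs_le_weight y)
  have hlip : ∀ y, |deriv ψ y| ≤ |deriv ψ 0| + κ₂ * |y| := by
    intro y
    have := Convex.norm_image_sub_le_of_norm_deriv_le (f := deriv ψ) (C := κ₂) (s := Set.univ)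
      (x := 0) (y := y) (fun x _ => hd2 x)
      (fun x _ => by rw [norm_of_nonneg (by linarith [h1 x])]; exact h2 x)
      convex_univ trivial trivial
    rw [sub_zero, norm_eq_abs, norm_eq_abs] at this
    have h3 := abs_sub_abs_le_abs_sub (deriv ψ y) (deriv ψ 0)
    linarith
  have hκ₂ : 0 < κ₂ := by linarith [h1 0, h2 0]
  have hIp : Integrable (fun y => (deriv ψ y - σ) * exp (-ψ y + σ * y)) := by
    refine integrable_of_le_weight (c := |deriv ψ 0| + κ₂ + |σ|) hψc
      (hd2.continuous.sub continuous_const) hw fun y => ?_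
    have h3 := abs_sub (deriv ψ y) σ
    have h4 := hlip y
    have h5 := mul_le_mul_of_nonneg_left (abs_le_weight y) hκ₂.le
    have h6 : 0 ≤ (|deriv ψ 0| + |σ|) * y ^ 2 := by positivity
    nlinarith
  have hparts : ∫ y, (deriv ψ y - σ) * exp (-ψ y + σ * y) = 0 := by
    have := integral_eq_zero_of_hasDerivAt_of_integrable
      (f := fun y => exp (-ψ y + σ * y))
      (f' := fun y => -((deriv ψ y - σ) * exp (-ψ y + σ * y))) (fun y => by
        refine ((hd y).hasDerivAt.fun_neg.fun_add
          ((hasDerivAt_id y).const_mul σ)).exp.congr_deriv ?_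
        simp only [id]
        ring) hIp.neg hI
    rw [integral_neg] at this
    linarith
  set m := tiltMean ψ σ with hm
  have hmean : ∫ y, y * exp (-ψ y + σ * y) = m * tiltZ ψ σ := by
    rw [hm, tiltMean, div_mul_cancel₀ _ hZ.ne']
  set c := τ * t - κ₂ / 2 * t ^ 2 + τ * m with hc
  have hJ : exp c * tiltZ ψ σ ≤ tiltZ ψ (σ + τ) := by
    have e1 : tiltZ ψ (σ + τ) = ∫ y, exp (-ψ (y + t) + (σ + τ) * (y + t)) :=
      (integral_add_right_eq_self (fun y => exp (-ψ y + (σ + τ) * y)) t).symm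
    have hint : Integrable (fun y => (1 - τ * m) * exp (-ψ y + σ * y)
        - t * ((deriv ψ y - σ) * exp (-ψ y + σ * y)) + τ * (y * exp (-ψ y + σ * y))) :=
      ((hI.const_mul _).sub (hIp.const_mul _)).add (hIy.const_mul _)
    have e2 : exp c * tiltZ ψ σ = ∫ y, exp c * ((1 - τ * m) * exp (-ψ y + σ * y)
        - t * ((deriv ψ y - σ) * exp (-ψ y + σ * y)) + τ * (y * exp (-ψ y + σ * y))) := by
      have hI12 : Integrable (fun y => (1 - τ * m) * exp (-ψ y + σ * y)
          - t * ((deriv ψ y - σ) * exp (-ψ y + σ * y))) :=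
        (hI.const_mul _).sub (hIp.const_mul _)
      rw [integral_const_mul, integral_add hI12 (hIy.const_mul _), integral_sub (hI.const_mul _) (hIp.const_mul _),
        integral_const_mul, integral_const_mul, integral_const_mul, hparts, hmean, tiltZ]
      ring
    rw [e1, e2]
    refine integral_mono (hint.const_mul _)
      ((integrable_tilt hκ₁ hψ h1 (σ + τ)).comp_add_right t) fun y => ?_
    have hT := quad_upper hψ h2 y t
    set g := -(deriv ψ y - σ) * t + τ * (y - m) with hg
    calc exp c * ((1 - τ * m) * exp (-ψ y + σ * y)
        - t * ((deriv ψ y - σ) * exp (-ψ y + σ * y)) + τ * (y * exp (-ψ y + σ * y)))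
        = exp c * exp (-ψ y + σ * y) * (g + 1) := by rw [hg]; ring
      _ ≤ exp c * exp (-ψ y + σ * y) * exp g :=
        mul_le_mul_of_nonneg_left (add_one_le_exp g) (by positivity)
      _ = exp (c + (-ψ y + σ * y) + g) := by rw [exp_add (c + _), exp_add c]
      _ ≤ exp (-ψ (y + t) + (σ + τ) * (y + t)) := by
        apply exp_le_exp.2
        rw [hc, hg]
        nlinarith
  have := log_le_log (by positivity) hJ
  rw [log_mul (exp_pos _).ne' hZ.ne', log_exp] at this
  linarith

lemma tiltMean_surjective (hκ₁ : 0 < κ₁) (hψ : ContDiff ℝ 2 ψ)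
    (h1 : ∀ y, κ₁ ≤ deriv (deriv ψ) y) (h2 : ∀ y, deriv (deriv ψ) y ≤ κ₂) (A : ℝ) :
    ∃ s, tiltMean ψ s = A := by
  have hκ₂ : 0 < κ₂ := by linarith [h1 0, h2 0]
  have hcont : Continuous (tiltMean ψ) := by
    have hw := integrable_weight hκ₁ hψ h1
    have hZc : Continuous (tiltZ ψ) := by
      have := continuous_tilt (g := fun _ => 1) hψ.continuous continuous_const hw
        (fun y => by rw [abs_one]; nlinarith [sq_nonneg y])
      simp only [one_mul] at this
      exact this
    exact (continuous_tilt (g := fun y => y) hψ.continuous continuous_id hw abs_le_weight).div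
      hZc (fun σ => (tiltZ_pos hκ₁ hψ h1 σ).ne')
  -- adding the strong convexity bounds at both ends of `[σ, σ + τ]`
  have hgrow : ∀ σ τ, 0 < τ → τ / κ₂ ≤ tiltMean ψ (σ + τ) - tiltMean ψ σ := by
    intro σ τ hτ
    have ha := log_tiltZ_ge hκ₁ hψ h1 h2 σ τ (τ / κ₂)
    have hb := log_tiltZ_ge hκ₁ hψ h1 h2 (σ + τ) (-τ) (-(τ / κ₂))
    rw [add_neg_cancel_right] at hb
    have e : κ₂ * (τ / κ₂) ^ 2 = τ * (τ / κ₂) := by field_simp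
    refine le_of_mul_le_mul_left ?_ hτ
    nlinarith
  set R := κ₂ * (|A - tiltMean ψ 0| + 1) with hR
  have hRpos : 0 < R := by positivity
  have hRd : R / κ₂ = |A - tiltMean ψ 0| + 1 := by rw [hR]; field_simp
  have hup := hgrow 0 R hRpos
  have hdn := hgrow (-R) R hRpos
  rw [zero_add] at hup
  rw [neg_add_cancel] at hdn
  have hl := neg_abs_le (A - tiltMean ψ 0)
  have hu := le_abs_self (A - tiltMean ψ 0)
  exact mem_range_of_exists_le_of_exists_ge hcont ⟨-R, by linarith⟩ ⟨R, by linarith⟩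

/-- The strain energy has, at each `A`, a supporting line that is also tangent from above up to a
quadratic error: duality turns strong convexity of the log-partition function into this bound. -/
lemma W_sandwich (hκ₁ : 0 < κ₁) (hψ : ContDiff ℝ 2 ψ)
    (h1 : ∀ y, κ₁ ≤ deriv (deriv ψ) y) (h2 : ∀ y, deriv (deriv ψ) y ≤ κ₂) (A : ℝ) :
    ∃ s, ∀ h, W ψ A + s * h ≤ W ψ (A + h) ∧ W ψ (A + h) ≤ W ψ A + s * h + κ₂ / 2 * h ^ 2 := by
  obtain ⟨s, hs⟩ := tiltMean_surjective hκ₁ hψ h1 h2 A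
  have hle : ∀ h σ, σ * (A + h) - log (∫ y, exp (-ψ y + σ * y)) ≤
      s * (A + h) - log (tiltZ ψ s) + κ₂ / 2 * h ^ 2 := by
    intro h σ
    have := log_tiltZ_ge hκ₁ hψ h1 h2 s (σ - s) h
    rw [hs, add_sub_cancel] at this
    change σ * (A + h) - log (tiltZ ψ σ) ≤ _
    nlinarith
  have hup : ∀ h, W ψ (A + h) ≤ s * (A + h) - log (tiltZ ψ s) + κ₂ / 2 * h ^ 2 :=
    fun h => ciSup_le (hle h)
  have hdn : ∀ h, s * (A + h) - log (tiltZ ψ s) ≤ W ψ (A + h) := fun h =>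
    le_ciSup (f := fun σ => σ * (A + h) - log (∫ y, exp (-ψ y + σ * y)))
      ⟨_, Set.forall_mem_range.2 (hle h)⟩ s
  have hu0 := hup 0
  have hd0 := hdn 0
  simp only [add_zero] at hu0 hd0
  refine ⟨s, fun h => ⟨?_, ?_⟩⟩
  · have := hdn h
    nlinarith
  · have := hup h
    nlinarith

end

lemma hasDerivAt_of_sandwich {w : ℝ → ℝ} {A s K : ℝ}
    (h : ∀ h, w A + s * h ≤ w (A + h) ∧ w (A + h) ≤ w A + s * h + K * h ^ 2) :
    HasDerivAt w s A := by
  rw [hasDerivAt_iff_isLittleO_nhds_zero]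
  have hO : (fun h => w (A + h) - w A - h • s) =O[nhds 0] fun h : ℝ => h ^ 2 := by
    refine Asymptotics.IsBigO.of_bound |K| (Eventually.of_forall fun t => ?_)
    have h1 := h t
    rw [smul_eq_mul, norm_of_nonneg (by linarith), norm_of_nonneg (sq_nonneg t)]
    nlinarith [mul_le_mul_of_nonneg_right (le_abs_self K) (sq_nonneg t)]
  exact hO.trans_isLittleO (by simpa using Asymptotics.isLittleO_pow_id (𝕜 := ℝ) one_lt_two)

/-! ### The minimal energy of a chain -/

lemma sum_increments (u : ℕ → ℝ) (N : ℕ) (hN : 1 ≤ N) :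
    ∑ i ∈ Finset.Icc 2 N, (u i - u (i - 1)) = u N - u 1 := by
  induction N, hN using Nat.le_induction with
  | base => simp
  | succ n hn ih =>
    rw [Finset.sum_Icc_succ_top (by omega), ih]
    simp

/-- The minimiser is the chain with equal increments, by Jensen's inequality in the form of a
supporting line at the mean increment. -/
lemma EcgN_eq {w : ℝ → ℝ} (hw : ∀ a, ∃ s, ∀ h, w a + s * h ≤ w (a + h)) {N : ℕ} (hN : 2 ≤ N)
    (A y : ℝ) :
    EcgN w N A y = ((N : ℝ) - 1) * (w (A + (A - y) / ((N : ℝ) - 1)) - w A) := by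
  have hN' : (2 : ℝ) ≤ N := by exact_mod_cast hN
  have hM : (N : ℝ) - 1 ≠ 0 := by linarith
  have hcard : ((Finset.Icc 2 N).card : ℝ) = N - 1 := by
    rw [Nat.card_Icc, show N + 1 - 2 = N - 1 by omega, Nat.cast_sub (by omega), Nat.cast_one]
  set d := A + (A - y) / ((N : ℝ) - 1) with hd
  have hd' : ((N : ℝ) - 1) * d = N * A - y := by
    rw [hd]; field_simp; ring
  refine IsLeast.csInf_eq ⟨⟨fun i => y + ((i : ℝ) - 1) * d, by simp, by simp [hd'], ?_⟩, ?_⟩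
  · rw [← hcard, ← nsmul_eq_mul, ← Finset.sum_const]
    refine Finset.sum_congr rfl fun i hi => ?_
    have : 1 ≤ i := by have := (Finset.mem_Icc.1 hi).1; omega
    simp only [Nat.cast_sub this]
    congr 2
    push_cast
    ring
  · rintro E ⟨u, hu1, huN, rfl⟩
    obtain ⟨s, hs⟩ := hw d
    calc ((N : ℝ) - 1) * (w d - w A)
        = ∑ i ∈ Finset.Icc 2 N, (w d + s * (u i - u (i - 1) - d) - w A) := by
          rw [Finset.sum_sub_distrib, Finset.sum_add_distrib, ← Finset.mul_sum,
            Finset.sum_sub_distrib, sum_increments u N (by omega), Finset.sum_const,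
            Finset.sum_const, Finset.sum_const, nsmul_eq_mul, nsmul_eq_mul, nsmul_eq_mul, hcard,
            hu1, huN, hd']
          ring
      _ ≤ _ := Finset.sum_le_sum fun i _ => by
          have := hs (u i - u (i - 1) - d)
          rw [add_sub_cancel] at this
          linarith

/-! ### Convergence rate of one integral -/

/-- A chain energy `E N y` that exceeds its linearisation `s (A - y)` by at most
`K (A - y)² / (N - 1)` perturbs the log-integral by `O(1/N)`. -/
lemma log_integral_rate {V : ℝ → ℝ} {k A s K : ℝ} (hk : 0 < k) (hV : ContDiff ℝ 2 V)
    (hV2 : ∀ y, k ≤ deriv (deriv V) y) (hK : 0 < K) (E : ℕ → ℝ → ℝ)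
    (hEc : ∀ N, 2 ≤ N → Continuous (E N))
    (hE1 : ∀ N, 2 ≤ N → ∀ y, s * (A - y) ≤ E N y)
    (hE2 : ∀ N : ℕ, 2 ≤ N → ∀ y, E N y ≤ s * (A - y) + K * (A - y) ^ 2 / ((N : ℝ) - 1)) :
    (∀ N, 2 ≤ N → Integrable (fun y => exp (-V y - E N y)) ∧ 0 < ∫ y, exp (-V y - E N y)) ∧
    0 < ∫ y, exp (-V y + s * y) ∧
    ∃ C > 0, ∀ N : ℕ, 2 ≤ N →
      |log (∫ y, exp (-V y - E N y)) - (log (∫ y, exp (-V y + s * y)) - s * A)| ≤ C / N := by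
  have hVc := hV.continuous
  have hw := integrable_weight hk hV hV2 s
  have hI := integrable_tilt hk hV hV2 s
  have hIpos := tiltZ_pos hk hV hV2 s
  have hI2 : Integrable (fun y => (A - y) ^ 2 * exp (-V y + s * y)) := by
    refine integrable_of_le_weight (c := 2 * A ^ 2 + 2) hVc (by fun_prop) hw fun y => ?_
    rw [abs_of_nonneg (sq_nonneg _)]
    nlinarith [sq_nonneg (A + y), mul_nonneg (sq_nonneg A) (sq_nonneg y)]
  set f : ℝ → ℝ := fun y => exp (-V y + s * y) with hf
  have hfpos : ∀ y, 0 < f y := fun y => exp_pos _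
  have hfc : Continuous f := by fun_prop
  -- the excess over the linearised energy
  set D : ℕ → ℝ → ℝ := fun N y => E N y - s * (A - y) with hD
  have hDc : ∀ N, 2 ≤ N → Continuous (D N) := fun N hN => (hEc N hN).sub (by fun_prop)
  have hD0 : ∀ N, 2 ≤ N → ∀ y, 0 ≤ D N y := fun N hN y => by linarith [hE1 N hN y]
  have hfac : ∀ N, (fun y => exp (-V y - E N y)) =
      fun y => exp (-(s * A)) * (f y * exp (-D N y)) := by
    intro N
    ext y
    simp only [hf, hD, ← exp_add]
    congr 1
    ring
  have hfD : ∀ N, 2 ≤ N → Integrable (fun y => f y * exp (-D N y)) := by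
    intro N hN
    have hc := hDc N hN
    refine hI.mono' (by fun_prop) (Eventually.of_forall fun y => ?_)
    rw [norm_of_nonneg (mul_pos (hfpos y) (exp_pos _)).le]
    exact mul_le_of_le_one_right (hfpos y).le (exp_le_one_iff.2 (by linarith [hD0 N hN y]))
  have hJpos : ∀ N, 2 ≤ N → 0 < ∫ y, f y * exp (-D N y) := fun N hN =>
    integral_pos_of_pos (hfD N hN) fun y => mul_pos (hfpos y) (exp_pos _)
  -- a lower bound for the integrals that is uniform in `N`
  have hJi : Integrable (fun y => f y * exp (-(K * (A - y) ^ 2))) := by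
    refine hI.mono' (by fun_prop) (Eventually.of_forall fun y => ?_)
    rw [norm_of_nonneg (mul_pos (hfpos y) (exp_pos _)).le]
    exact mul_le_of_le_one_right (hfpos y).le (exp_le_one_iff.2 (by
      have : 0 ≤ K * (A - y) ^ 2 := by positivity
      linarith))
  set J := ∫ y, f y * exp (-(K * (A - y) ^ 2)) with hJ
  have hJ0 : 0 < J := integral_pos_of_pos hJi fun y => mul_pos (hfpos y) (exp_pos _)
  set S := ∫ y, (A - y) ^ 2 * f y with hS
  have hS0 : 0 ≤ S := integral_nonneg fun y => mul_nonneg (sq_nonneg _) (hfpos y).le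
  refine ⟨fun N hN => ?_, hIpos, 2 * (K * S / J) + 1, by positivity, fun N hN => ?_⟩
  · rw [hfac]
    exact ⟨(hfD N hN).const_mul _, by
      rw [integral_const_mul]; exact mul_pos (exp_pos _) (hJpos N hN)⟩
  have hN' : (2 : ℝ) ≤ N := by exact_mod_cast hN
  have hM : 0 < (N : ℝ) - 1 := by linarith
  set I := ∫ y, f y with hIdef
  have hIpos' : 0 < I := hIpos
  set X := ∫ y, f y * exp (-D N y) with hX
  have hX0 : 0 < X := hJpos N hN
  have hJX : J ≤ X := by
    refine integral_mono hJi (hfD N hN) fun y => ?_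
    refine mul_le_mul_of_nonneg_left (exp_le_exp.2 (neg_le_neg ?_)) (hfpos y).le
    have h1 : K * (A - y) ^ 2 / ((N : ℝ) - 1) ≤ K * (A - y) ^ 2 :=
      div_le_self (by positivity) (by linarith)
    linarith [hE2 N hN y]
  have hXI : X ≤ I := by
    refine integral_mono (hfD N hN) hI fun y => ?_
    exact mul_le_of_le_one_right (hfpos y).le (exp_le_one_iff.2 (by linarith [hD0 N hN y]))
  have hdiff : I - X ≤ K / ((N : ℝ) - 1) * S := by
    rw [hIdef, hX, ← integral_sub hI (hfD N hN), hS, ← integral_const_mul]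
    refine integral_mono (hI.sub (hfD N hN)) (hI2.const_mul _) fun y => ?_
    have h1 := one_sub_le_exp_neg (D N y)
    have h2 : D N y ≤ K / ((N : ℝ) - 1) * (A - y) ^ 2 := by
      have := hE2 N hN y
      rw [mul_div_right_comm] at this
      simp only [hD]
      linarith
    have h3 := hfpos y
    change f y - f y * exp (-D N y) ≤ K / ((N : ℝ) - 1) * ((A - y) ^ 2 * f y)
    nlinarith
  have hlog1 : log X ≤ log I := log_le_log hX0 hXI
  have hlog2 : log I - log X ≤ K / ((N : ℝ) - 1) * S / J := by
    rw [← log_div hIpos'.ne' hX0.ne']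
    calc log (I / X) ≤ I / X - 1 := log_le_sub_one_of_pos (by positivity)
      _ = (I - X) / X := by field_simp
      _ ≤ (I - X) / J := div_le_div_of_nonneg_left (by linarith) hJ0 hJX
      _ ≤ _ := by gcongr
  have hMN : 1 / ((N : ℝ) - 1) ≤ 2 / N := by
    rw [div_le_div_iff₀ hM (by linarith)]; linarith
  rw [hfac, integral_const_mul, log_mul (exp_pos _).ne' hX0.ne', log_exp, abs_le]
  have hq : 0 ≤ K * S / J := by positivity
  have hfin : K / ((N : ℝ) - 1) * S / J ≤ (2 * (K * S / J) + 1) / N := by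
    calc K / ((N : ℝ) - 1) * S / J = (K * S / J) * (1 / ((N : ℝ) - 1)) := by ring
      _ ≤ (K * S / J) * (2 / N) := by gcongr
      _ = (2 * (K * S / J)) / N := by ring
      _ ≤ _ := by gcongr; linarith
  constructor <;> linarith

/-! ### The defect-formation free energy -/

/-- `G_N^cg(A)` is well-defined and approximates `G_∞(A)` at rate `1/N`. -/
theorem coarse_grained_free_energy_well_defined_and_rate
    (ψ P : ℝ → ℝ) (κ₁ κ₂ ς₁ ς₂ : ℝ)
    (hψ : ContDiff ℝ 2 ψ) (hP : ContDiff ℝ 2 P)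
    (hκ₁ : 0 < κ₁) (hκ : κ₁ ≤ κ₂) (hς₁ : 0 < ς₁) (hς : ς₁ ≤ ς₂)
    (hψ'' : ∀ y : ℝ, κ₁ ≤ deriv (deriv ψ) y ∧ deriv (deriv ψ) y ≤ κ₂)
    (hψP'' : ∀ y : ℝ, ς₁ ≤ deriv (deriv (fun z => ψ z + P z)) y ∧
        deriv (deriv (fun z => ψ z + P z)) y ≤ ς₂)
    (A : ℝ) :
    (∀ N : ℕ, 2 ≤ N →
      Integrable (fun y : ℝ => Real.exp (-P y - ψ y - EcgN (W ψ) N A y)) ∧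
      0 < ∫ y : ℝ, Real.exp (-P y - ψ y - EcgN (W ψ) N A y) ∧
      Integrable (fun y : ℝ => Real.exp (-ψ y - EcgN (W ψ) N A y)) ∧
      0 < ∫ y : ℝ, Real.exp (-ψ y - EcgN (W ψ) N A y)) ∧
    ∃ C > 0, ∀ N : ℕ, 2 ≤ N →
      |GNcg ψ P N A -
        (- Real.log
          ((∫ y : ℝ, Real.exp (-(ψ y + P y) + deriv (W ψ) A * y)) /
           (∫ y : ℝ, Real.exp (-ψ y + deriv (W ψ) A * y))))| ≤ C / N := by
  have hsand := W_sandwich hκ₁ hψ (fun y => (hψ'' y).1) (fun y => (hψ'' y).2)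
  have hWc : Continuous (W ψ) := continuous_iff_continuousAt.2 fun a => by
    obtain ⟨s, hs⟩ := hsand a
    exact (hasDerivAt_of_sandwich hs).continuousAt
  have hEq : ∀ N : ℕ, 2 ≤ N → ∀ y, EcgN (W ψ) N A y = _ := fun N hN y =>
    EcgN_eq (fun a => (hsand a).imp fun s hs h => (hs h).1) hN A y
  obtain ⟨s, hs⟩ := hsand A
  have hderiv : deriv (W ψ) A = s := (hasDerivAt_of_sandwich hs).deriv
  have hEc : ∀ N, 2 ≤ N → Continuous (fun y => EcgN (W ψ) N A y) := fun N hN => by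
    simp only [hEq N hN]
    fun_prop
  have hE1 : ∀ N, 2 ≤ N → ∀ y, s * (A - y) ≤ EcgN (W ψ) N A y := fun N hN y => by
    have hM : 0 < (N : ℝ) - 1 := by
      have : (2 : ℝ) ≤ N := by exact_mod_cast hN
      linarith
    rw [hEq N hN]
    have := mul_le_mul_of_nonneg_left (hs ((A - y) / ((N : ℝ) - 1))).1 hM.le
    have e : ((N : ℝ) - 1) * (W ψ A + s * ((A - y) / ((N : ℝ) - 1))) =
        ((N : ℝ) - 1) * W ψ A + s * (A - y) := by field_simp
    linarith
  have hE2 : ∀ N : ℕ, 2 ≤ N → ∀ y,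
      EcgN (W ψ) N A y ≤ s * (A - y) + κ₂ / 2 * (A - y) ^ 2 / ((N : ℝ) - 1) := fun N hN y => by
    have hM : 0 < (N : ℝ) - 1 := by
      have : (2 : ℝ) ≤ N := by exact_mod_cast hN
      linarith
    rw [hEq N hN]
    have := mul_le_mul_of_nonneg_left (hs ((A - y) / ((N : ℝ) - 1))).2 hM.le
    have e : ((N : ℝ) - 1) * (W ψ A + s * ((A - y) / ((N : ℝ) - 1)) +
        κ₂ / 2 * ((A - y) / ((N : ℝ) - 1)) ^ 2) =
        ((N : ℝ) - 1) * W ψ A + s * (A - y) + κ₂ / 2 * (A - y) ^ 2 / ((N : ℝ) - 1) := by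
      field_simp
    linarith
  have hκ₂ : 0 < κ₂ / 2 := by linarith
  obtain ⟨hd, hd0, C₁, hC₁, hdr⟩ := log_integral_rate hκ₁ hψ (fun y => (hψ'' y).1) hκ₂
    (fun N y => EcgN (W ψ) N A y) hEc hE1 hE2
  obtain ⟨hn, hn0, C₂, hC₂, hnr⟩ := log_integral_rate hς₁ (hψ.add hP)
    (fun y => (hψP'' y).1) hκ₂ (fun N y => EcgN (W ψ) N A y) hEc hE1 hE2
  have hrw : ∀ N, (fun y => exp (-(ψ y + P y) - EcgN (W ψ) N A y)) =
      fun y => exp (-P y - ψ y - EcgN (W ψ) N A y) := fun N => by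
    ext y; congr 1; ring
  simp only [hrw] at hn hn0 hnr
  refine ⟨fun N hN => ⟨(hn N hN).1, (hn N hN).2, (hd N hN).1, (hd N hN).2⟩,
    C₁ + C₂, by positivity, fun N hN => ?_⟩
  rw [GNcg, hderiv, log_div (hn N hN).2.ne' (hd N hN).2.ne', log_div hn0.ne' hd0.ne', add_div]
  have h1 := abs_le.1 (hdr N hN)
  have h2 := abs_le.1 (hnr N hN)
  rw [abs_le]
  constructor <;> linarith [h1.1, h1.2, h2.1, h2.2]
end
end

section
/- With the definitions in the context, the free energy difference satisfies F_N^P(A) − F_N(A) = N·[W_N^P(A) − W(A)] + log( g_{N,A}(0) / g^P_{N,A}(0) ). -/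
/-!
Write `b = N A`. For bond potentials `f₁, …, f_N` and a tilt `σ`, let `r_i = Z_i⁻¹ exp(σ y - f_i y)`
be the Gibbs densities. Passing from increments to partial sums is a unimodular linear change of
variables (`measurePreserving_incr`), so the sum of independent variables with these densities has
density at `b` equal to the integral of `∏ r_i(u_i - u_{i-1})` over chains with `u₀ = 0`, `u_N = b`
(`map_sum_eq`). The tilt contributes only the factor `exp(σ b)`, because the increments telescope;
what remains is the constrained partition function. Hence, as soon as the means add up to `b`, the
density `g` of the normalised sum satisfies
`log g(0) = ½ log N + σ b - ∑ log Z_i + log ∫ exp(-∑ f_i(u_i - u_{i-1})) du` (`log_density_zero`),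
that is, `½ log N` plus `N` times the strain energy minus the free energy.

The requirement on the means is the first-order condition for the maximizers `σ₀` and `σ_P^N`, since
the derivative of the log-partition function is the Gibbs mean (`hasDerivAt_log_partition`). A defect
acting on `u₁` is a modified first bond (`freeEnergy_eq`), so the formula applies with and without
defect, and the identity is the difference of the two instances.

The law of the normalised sum determines its density only almost everywhere; evaluating at `0` uses
continuity of `g` and of the explicit density. The latter is dominated convergence: uniform convexity
gives Gaussian bounds on the Gibbs weights (`gibbs_weight_le`), hence their integrability and
boundedness, and only the last factor depends on the endpoint.
-/

noncomputable section

open MeasureTheory Real Filter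

/-- Extend interior degrees of freedom `u : ℝ^(n-1)` to the whole chain via the
boundary conditions `u 0 = 0` and `u n = b`. -/
def bc (n : ℕ) (b : ℝ) (u : Fin (n - 1) → ℝ) : ℕ → ℝ := fun i =>
  if h : 0 < i ∧ i < n then u ⟨i - 1, by omega⟩ else if i = 0 then 0 else b

/-- The chain energy `∑_{i=1}^n φ_i (u_i - u_{i-1})` with boundary conditions
`u 0 = 0`, `u n = b`. -/
def chainE (φ : ℕ → ℝ → ℝ) (n : ℕ) (b : ℝ) (u : Fin (n - 1) → ℝ) : ℝ :=
  ∑ i ∈ Finset.range n, φ (i + 1) (bc n b u (i + 1) - bc n b u i)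

/-- The free energy `-log ∫_{ℝ^{N-1}} exp(-∑ φ_i(u_i-u_{i-1}) - defect(u₁)) du`. -/
def freeEnergy (φ : ℕ → ℝ → ℝ) (defect : ℝ → ℝ) (N : ℕ) (A : ℝ) : ℝ :=
  - Real.log (∫ u : Fin (N - 1) → ℝ,
      Real.exp (-(chainE φ N (N * A) u) - defect (bc N (N * A) u 1)))

/-- `W_N^P(A)`, the analogue of `W` for the defect material. -/
def WNP (ψ P : ℝ → ℝ) (N : ℕ) (A : ℝ) : ℝ :=
  ⨆ σ : ℝ, (σ * A - (N : ℝ)⁻¹ *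
    (Real.log (∫ y : ℝ, Real.exp (-(ψ y + P y) + σ * y)) +
     ((N : ℝ) - 1) * Real.log (∫ y : ℝ, Real.exp (-ψ y + σ * y))))

/-- The one-dimensional Gibbs measure `Z⁻¹ exp(σ y - f y) dy`. -/
def gibbs (f : ℝ → ℝ) (σ : ℝ) : Measure ℝ :=
  volume.withDensity fun y =>
    ENNReal.ofReal ((∫ z : ℝ, Real.exp (σ * z - f z))⁻¹ * Real.exp (σ * y - f y))

/-- The mean of the Gibbs measure. -/
def gibbsMean (f : ℝ → ℝ) (σ : ℝ) : ℝ :=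
  (∫ z : ℝ, z * Real.exp (σ * z - f z)) / (∫ z : ℝ, Real.exp (σ * z - f z))

/-! ### Increments and partial sums -/

/-- The increments `x_i - x_{i-1}` of a finite sequence, with the convention `x_{-1} = 0`. -/
def incr (n : ℕ) (x : Fin n → ℝ) : Fin n → ℝ := fun i =>
  x i - if h : (i : ℕ) = 0 then 0 else x ⟨i - 1, by omega⟩

lemma incr_castSucc {n : ℕ} (x : Fin (n + 1) → ℝ) (i : Fin n) :
    incr (n + 1) x i.castSucc = incr n (fun j => x j.castSucc) i := rfl

lemma sum_incr (n : ℕ) (x : Fin (n + 1) → ℝ) :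
    ∑ i, incr (n + 1) x i = x (Fin.last n) := by
  induction n with
  | zero => simp [incr]
  | succ n ih =>
    rw [Fin.sum_univ_castSucc]
    simp only [incr_castSucc]
    rw [ih]
    have : incr (n + 1 + 1) x (Fin.last (n + 1))
        = x (Fin.last (n + 1)) - x (Fin.last n).castSucc := by
      simp only [incr, Fin.val_last, Nat.add_eq_zero_iff, one_ne_zero, and_false, dite_false]
      rfl
    rw [this]; ring

lemma incr_snoc_castSucc {n : ℕ} (u : Fin n → ℝ) (s : ℝ) (i : Fin n) :
    incr (n + 1) (Fin.snoc u s) i.castSucc = incr n u i := by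
  rw [incr_castSucc]; simp

lemma continuous_incr (n : ℕ) : Continuous (incr n) := by
  refine continuous_pi fun i => ?_
  unfold incr
  split_ifs <;> fun_prop

/-- The increment map is linear with unitriangular matrix, so it preserves Lebesgue measure. -/
lemma measurePreserving_incr (n : ℕ) :
    MeasurePreserving (incr n) volume volume := by
  refine ⟨(continuous_incr n).measurable, ?_⟩
  let M : Matrix (Fin n) (Fin n) ℝ := fun i j =>
    (if i = j then 1 else 0) - (if (j : ℕ) + 1 = i then 1 else 0)
  have hdet : M.det = 1 := by
    rw [Matrix.det_of_isLowerTriangular]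
    · simp [M]
    · intro i j hij
      have hij' : i < j := hij
      simp only [M]
      rw [if_neg (ne_of_lt hij'), if_neg]
      · simp
      · have : (i : ℕ) < j := hij'
        omega
  have hM : incr n = Matrix.toLin' M := by
    funext x i
    rw [Matrix.toLin'_apply]
    simp only [Matrix.mulVec, dotProduct, M, sub_mul, ite_mul, one_mul,
      zero_mul, Finset.sum_sub_distrib, Finset.sum_ite_eq, Finset.mem_univ, if_true, incr]
    congr 1
    split_ifs with h
    · rw [Finset.sum_eq_zero]
      intro j _
      rw [if_neg]; omega
    · rw [Finset.sum_eq_single ⟨i - 1, by omega⟩]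
      · rw [if_pos]; simp only; omega
      · intro j _ hj
        rw [if_neg]
        intro h'
        apply hj
        ext; simp only; omega
      · simp
  rw [hM, Real.map_matrix_volume_pi_eq_smul_volume_pi (by simp [hdet])]
  simp [hdet]

lemma pi_withDensity_ofReal (n : ℕ) (r : Fin n → ℝ → ℝ) (hr0 : ∀ i y, 0 ≤ r i y)
    (hri : ∀ i, Integrable (r i)) :
    Measure.pi (fun i => volume.withDensity fun y => ENNReal.ofReal (r i y)) =
      (volume : Measure (Fin n → ℝ)).withDensity
        fun x => ENNReal.ofReal (∏ i, r i (x i)) := by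
  have hfin : ∀ i, IsFiniteMeasure (volume.withDensity fun y => ENNReal.ofReal (r i y)) :=
    fun i => isFiniteMeasure_withDensity_ofReal (hri i).2
  refine Measure.pi_eq fun s hs => ?_
  rw [withDensity_apply _ (MeasurableSet.univ_pi hs),
    ← lintegral_indicator (MeasurableSet.univ_pi hs)]
  have key : ∀ x : Fin n → ℝ,
      (Set.univ.pi s).indicator (fun x => ENNReal.ofReal (∏ i, r i (x i))) x =
        ENNReal.ofReal (∏ i, (s i).indicator (r i) (x i)) := by
    intro x
    by_cases hx : x ∈ Set.univ.pi s
    · rw [Set.indicator_of_mem hx]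
      congr 1
      refine Finset.prod_congr rfl fun i _ => ?_
      rw [Set.indicator_of_mem (hx i (Set.mem_univ i))]
    · rw [Set.indicator_of_notMem hx]
      simp only [Set.mem_pi, Set.mem_univ, true_imp_iff, not_forall] at hx
      obtain ⟨i, hi⟩ := hx
      rw [Finset.prod_eq_zero (Finset.mem_univ i) (Set.indicator_of_notMem hi _)]
      simp
  have hI : ∀ i, Integrable ((s i).indicator (r i)) := fun i => (hri i).indicator (hs i)
  have hn : ∀ i y, 0 ≤ (s i).indicator (r i) y := fun i y =>
    Set.indicator_nonneg (fun y _ => hr0 i y) y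
  simp only [key]
  rw [← ofReal_integral_eq_lintegral_ofReal]
  · rw [integral_fintype_prod_volume_eq_prod (fun i => (s i).indicator (r i)),
      ENNReal.ofReal_prod_of_nonneg (fun i _ => integral_nonneg (hn i))]
    refine Finset.prod_congr rfl fun i _ => ?_
    rw [withDensity_apply _ (hs i), integral_indicator (hs i),
      ofReal_integral_eq_lintegral_ofReal (hri i).integrableOn (ae_of_all _ (hr0 i))]
  · exact Integrable.fintype_prod hI
  · exact ae_of_all _ fun x => Finset.prod_nonneg fun i _ => hn i _

/-! ### Density of a sum of independent variables -/

/-- The density at `s` of a sum of independent variables with densities `r i`, written as an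
integral over the intermediate partial sums. -/
def sumDensity (n : ℕ) (r : Fin (n + 1) → ℝ → ℝ) (s : ℝ) : ℝ :=
  ∫ u : Fin n → ℝ, ∏ i, r i (incr (n + 1) (Fin.snoc u s) i)

lemma continuous_snoc (n : ℕ) :
    Continuous fun p : ℝ × (Fin n → ℝ) => (Fin.snoc p.2 p.1 : Fin (n + 1) → ℝ) := by
  refine continuous_pi fun i => ?_
  refine Fin.lastCases ?_ (fun j => ?_) i
  · simp only [Fin.snoc_last]; fun_prop
  · simp only [Fin.snoc_castSucc]; fun_prop

lemma continuous_prod_incr (n : ℕ) (r : Fin (n + 1) → ℝ → ℝ) (hc : ∀ i, Continuous (r i)) :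
    Continuous fun p : ℝ × (Fin n → ℝ) => ∏ i, r i (incr (n + 1) (Fin.snoc p.2 p.1) i) := by
  refine continuous_finsetProd _ fun i _ => (hc i).comp ?_
  exact (continuous_apply i).comp ((continuous_incr _).comp (continuous_snoc n))

/-- Only the last factor depends on the endpoint `s`; bounding it by a constant gives a dominating
function that does not depend on `s`. -/
lemma prod_incr_bound (n : ℕ) (r : Fin (n + 1) → ℝ → ℝ) (hr0 : ∀ i y, 0 ≤ r i y)
    (C : ℝ) (hC : ∀ i y, r i y ≤ C) (s : ℝ) (u : Fin n → ℝ) :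
    ‖∏ i, r i (incr (n + 1) (Fin.snoc u s) i)‖ ≤ (∏ i : Fin n, r i.castSucc (incr n u i)) * C := by
  rw [Real.norm_of_nonneg (Finset.prod_nonneg fun i _ => hr0 i _), Fin.prod_univ_castSucc]
  simp only [incr_snoc_castSucc]
  exact mul_le_mul_of_nonneg_left (hC _ _) (Finset.prod_nonneg fun i _ => hr0 _ _)

lemma integrable_bound (n : ℕ) (r : Fin (n + 1) → ℝ → ℝ) (hri : ∀ i, Integrable (r i)) (C : ℝ) :
    Integrable fun u : Fin n → ℝ => (∏ i : Fin n, r i.castSucc (incr n u i)) * C := by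
  have h : Integrable fun x : Fin n → ℝ => ∏ i : Fin n, r i.castSucc (x i) :=
    Integrable.fintype_prod fun i => hri _
  exact ((measurePreserving_incr n).integrable_comp_of_integrable h).mul_const C

lemma integrable_prod_incr (n : ℕ) (r : Fin (n + 1) → ℝ → ℝ) (hc : ∀ i, Continuous (r i))
    (hr0 : ∀ i y, 0 ≤ r i y) (hri : ∀ i, Integrable (r i))
    (C : ℝ) (hC : ∀ i y, r i y ≤ C) (s : ℝ) :
    Integrable fun u : Fin n → ℝ => ∏ i, r i (incr (n + 1) (Fin.snoc u s) i) :=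
  (integrable_bound n r hri C).mono'
    (((continuous_prod_incr n r hc).comp (by fun_prop : Continuous fun u : Fin n → ℝ =>
      (s, u))).aestronglyMeasurable)
    (ae_of_all _ fun u => prod_incr_bound n r hr0 C hC s u)

lemma continuous_sumDensity (n : ℕ) (r : Fin (n + 1) → ℝ → ℝ) (hc : ∀ i, Continuous (r i))
    (hr0 : ∀ i y, 0 ≤ r i y) (hri : ∀ i, Integrable (r i))
    (C : ℝ) (hC : ∀ i y, r i y ≤ C) : Continuous (sumDensity n r) := by
  refine continuous_of_dominated (fun s => ?_) (fun s => ae_of_all _ fun u =>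
    prod_incr_bound n r hr0 C hC s u) (integrable_bound n r hri C) (ae_of_all _ fun u => ?_)
  · exact (integrable_prod_incr n r hc hr0 hri C hC s).aestronglyMeasurable
  · exact (continuous_prod_incr n r hc).comp (by fun_prop : Continuous fun s : ℝ => (s, u))

/-- The law of `c * (∑ x_i - b)` has density `c⁻¹ * sumDensity (c⁻¹ t + b)`. -/
lemma map_sum_eq (n : ℕ) (r : Fin (n + 1) → ℝ → ℝ) (hc : ∀ i, Continuous (r i))
    (hr0 : ∀ i y, 0 ≤ r i y) (hri : ∀ i, Integrable (r i))
    (C : ℝ) (hC : ∀ i y, r i y ≤ C) (c b : ℝ) (hcpos : 0 < c) :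
    Measure.map (fun x : Fin (n + 1) → ℝ => c * (∑ i, x i - b))
      (Measure.pi (fun i => volume.withDensity fun y => ENNReal.ofReal (r i y))) =
    volume.withDensity fun t => ENNReal.ofReal (c⁻¹ * sumDensity n r (c⁻¹ * t + b)) := by
  have hm : Measurable fun x : Fin (n + 1) → ℝ => c * (∑ i, x i - b) := by fun_prop
  have hcs := continuous_sumDensity n r hc hr0 hri C hC
  have hmd : Measurable fun x : Fin (n + 1) → ℝ => ENNReal.ofReal (∏ i, r i (x i)) := by
    have : Continuous fun x : Fin (n + 1) → ℝ => ∏ i, r i (x i) :=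
      continuous_finsetProd _ fun i _ => (hc i).comp (continuous_apply i)
    exact this.measurable.ennreal_ofReal
  rw [pi_withDensity_ofReal _ _ hr0 hri]
  refine Measure.ext_of_lintegral _ fun F hF => ?_
  rw [lintegral_map hF hm, lintegral_withDensity_eq_lintegral_mul _ hmd (g := fun x => F (c * (∑ i, x i - b)))
      (hF.comp hm),
    lintegral_withDensity_eq_lintegral_mul _ (by fun_prop) hF]
  simp only [Pi.mul_apply]
  have hmeas1 : Measurable fun x : Fin (n + 1) → ℝ =>
      ENNReal.ofReal (∏ i, r i (x i)) * F (c * (∑ i, x i - b)) := hmd.mul (hF.comp hm)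
  have hmeas2 : Measurable fun s : ℝ =>
      ENNReal.ofReal (sumDensity n r s) * F (c * (s - b)) :=
    hcs.measurable.ennreal_ofReal.mul (hF.comp (by fun_prop))
  -- pass from increments to partial sums
  rw [← (measurePreserving_incr (n + 1)).lintegral_comp hmeas1]
  simp only [sum_incr]
  -- separate the last partial sum from the others
  rw [← ((volume_preserving_piFinSuccAbove (fun _ : Fin (n + 1) => ℝ)
    (Fin.last n)).symm).lintegral_comp_emb (MeasurableEquiv.measurableEmbedding _)]
  have hsnoc : ∀ p : ℝ × (Fin n → ℝ), Fin.insertNthEquiv (fun _ : Fin (n + 1) => ℝ) (Fin.last n) p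
      = Fin.snoc p.2 p.1 := fun p => Fin.insertNth_last' _ _
  simp only [MeasurableEquiv.piFinSuccAbove_symm_apply, hsnoc]
  rw [Measure.volume_eq_prod, lintegral_prod _ (by
    apply Measurable.aemeasurable
    refine ((continuous_prod_incr n r hc).measurable.ennreal_ofReal).mul (hF.comp ?_)
    simp only [Fin.snoc_last]; fun_prop)]
  have hinner : ∀ s : ℝ, ∫⁻ u : Fin n → ℝ,
      ENNReal.ofReal (∏ i, r i (incr (n + 1) (Fin.snoc u s) i)) *
        F (c * ((Fin.snoc u s : Fin (n + 1) → ℝ) (Fin.last n) - b)) =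
      ENNReal.ofReal (sumDensity n r s) * F (c * (s - b)) := by
    intro s
    simp only [Fin.snoc_last]
    rw [lintegral_mul_const, sumDensity, ofReal_integral_eq_lintegral_ofReal
      (integrable_prod_incr n r hc hr0 hri C hC s)
      (ae_of_all _ fun u => Finset.prod_nonneg fun i _ => hr0 i _)]
    exact (((continuous_prod_incr n r hc).comp (by fun_prop : Continuous fun u : Fin n → ℝ =>
      (s, u))).measurable.ennreal_ofReal)
  simp only [hinner]
  -- the substitution `s = c⁻¹ * t + b`
  rw [← lintegral_add_right_eq_self _ b]
  conv_lhs => rw [← Real.smul_map_volume_mul_left (inv_ne_zero hcpos.ne')]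
  rw [lintegral_smul_measure, lintegral_map (by fun_prop) (by fun_prop), smul_eq_mul,
    abs_of_pos (inv_pos.2 hcpos), ← lintegral_const_mul _ (by fun_prop)]
  refine lintegral_congr fun t => ?_
  rw [ENNReal.ofReal_mul (inv_pos.2 hcpos).le, ← mul_assoc]
  congr 2
  field_simp
  ring

lemma density_zero (n : ℕ) (r : Fin (n + 1) → ℝ → ℝ) (hc : ∀ i, Continuous (r i))
    (hr0 : ∀ i y, 0 < r i y) (hri : ∀ i, Integrable (r i))
    (C : ℝ) (hC : ∀ i y, r i y ≤ C) (c b : ℝ) (hcpos : 0 < c) (g : ℝ → ℝ) (hg : Continuous g)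
    (hmap : Measure.map (fun x : Fin (n + 1) → ℝ => c * (∑ i, x i - b))
      (Measure.pi (fun i => volume.withDensity fun y => ENNReal.ofReal (r i y))) =
      volume.withDensity fun t => ENNReal.ofReal (g t)) :
    0 < sumDensity n r b ∧ g 0 = c⁻¹ * sumDensity n r b := by
  have hcs := continuous_sumDensity n r hc (fun i y => (hr0 i y).le) hri C hC
  rw [map_sum_eq n r hc (fun i y => (hr0 i y).le) hri C hC c b hcpos,
    withDensity_eq_iff_of_sigmaFinite (by fun_prop) (by fun_prop)] at hmap
  have heq := congrFun ((Continuous.ae_eq_iff_eq volume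
    (ENNReal.continuous_ofReal.comp (by fun_prop : Continuous fun t =>
      c⁻¹ * sumDensity n r (c⁻¹ * t + b)))
    (ENNReal.continuous_ofReal.comp hg)).1 hmap) 0
  simp only [Function.comp_apply, mul_zero, zero_add] at heq
  have hpos : 0 < sumDensity n r b := by
    have hp : ∀ u : Fin n → ℝ, 0 < ∏ i, r i (incr (n + 1) (Fin.snoc u b) i) :=
      fun u => Finset.prod_pos fun i _ => hr0 i _
    rw [sumDensity, integral_pos_iff_support_of_nonneg (fun u => (hp u).le)
      (integrable_prod_incr n r hc (fun i y => (hr0 i y).le) hri C hC b)]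
    have : Function.support (fun u : Fin n → ℝ => ∏ i, r i (incr (n + 1) (Fin.snoc u b) i))
        = Set.univ := Set.eq_univ_of_forall fun u => (hp u).ne'
    rw [this]
    exact isOpen_univ.measure_pos _ Set.univ_nonempty
  refine ⟨hpos, ?_⟩
  have hp2 : 0 < c⁻¹ * sumDensity n r b := mul_pos (inv_pos.2 hcpos) hpos
  have hg0 : 0 < g 0 := by
    rw [← ENNReal.ofReal_pos, ← heq, ENNReal.ofReal_pos]; exact hp2
  exact ((ENNReal.ofReal_eq_ofReal_iff hp2.le hg0.le).1 heq).symm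

/-! ### Gibbs weights, tilted means and the chain partition function -/

/-- A function with second derivative at least `c > 0` lies above a parabola, so its tilted Gibbs
weight is dominated by a Gaussian. -/
lemma gibbs_weight_le (f : ℝ → ℝ) (hf : ContDiff ℝ 2 f) (c : ℝ) (hc : 0 < c)
    (h : ∀ y, c ≤ deriv (deriv f) y) (σ : ℝ) :
    ∃ K, 0 ≤ K ∧ ∀ y, Real.exp (σ * y - f y) ≤ K * Real.exp (-(c / 4) * y ^ 2) := by
  have hd : Differentiable ℝ f := hf.differentiable (by norm_num)
  have hd' : Differentiable ℝ (deriv f) :=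
    ((contDiff_succ_iff_deriv (n := 1)).1 hf).2.2.differentiable (by norm_num)
  let q : ℝ → ℝ := fun y => f y - c / 2 * y ^ 2
  have hq : ∀ y, HasDerivAt q (deriv f y - c * y) y := fun y => by
    convert! (hd y).hasDerivAt.sub (((hasDerivAt_id y).pow 2).const_mul (c / 2)) using 1
    simp; ring
  have hq' : deriv q = fun y => deriv f y - c * y := funext fun y => (hq y).deriv
  have hmono : Monotone (deriv q) := by
    rw [hq']
    have hq2 : ∀ y, HasDerivAt (fun y => deriv f y - c * y) (deriv (deriv f) y - c) y :=
      fun y => by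
        convert! (hd' y).hasDerivAt.sub ((hasDerivAt_id y).const_mul c) using 1
        simp
    refine monotone_of_deriv_nonneg (fun y => (hq2 y).differentiableAt) fun y => ?_
    rw [(hq2 y).deriv]; linarith [h y]
  have hconv : ConvexOn ℝ Set.univ q :=
    hmono.convexOn_univ_of_deriv fun y => (hq y).differentiableAt
  have htan : ∀ y, f 0 + deriv f 0 * y ≤ q y := by
    intro y
    have h0 : HasDerivAt q (deriv f 0) 0 := by simpa using hq 0
    have hq0 : q 0 = f 0 := by simp [q]
    rcases lt_trichotomy y 0 with hy | hy | hy
    · have := hconv.slope_le_of_hasDerivAt (Set.mem_univ y) (Set.mem_univ 0) hy h0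
      rw [slope_def_field, div_le_iff₀ (by linarith)] at this
      linarith
    · subst hy; simp [hq0]
    · have := hconv.le_slope_of_hasDerivAt (Set.mem_univ 0) (Set.mem_univ y) hy h0
      rw [slope_def_field, le_div_iff₀ (by linarith)] at this
      linarith
  refine ⟨Real.exp ((σ - deriv f 0) ^ 2 / c - f 0), (Real.exp_pos _).le, fun y => ?_⟩
  rw [← Real.exp_add, Real.exp_le_exp]
  have h1 := htan y
  simp only [q] at h1
  -- complete the square to absorb the linear term into half of the quadratic one
  have h2 : (σ - deriv f 0) * y ≤ c / 4 * y ^ 2 + (σ - deriv f 0) ^ 2 / c := by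
    have : c / 4 * y ^ 2 + (σ - deriv f 0) ^ 2 / c - (σ - deriv f 0) * y
        = (c * y / 2 - (σ - deriv f 0)) ^ 2 / c := by field_simp; ring
    have h3 : 0 ≤ (c * y / 2 - (σ - deriv f 0)) ^ 2 / c := by positivity
    linarith
  linarith

/-- The two properties of a potential that the argument uses: every tilted Gibbs weight is
integrable and bounded. -/
lemma gibbs_weight_integrable_bdd (f : ℝ → ℝ) (hf : ContDiff ℝ 2 f) (c : ℝ) (hc : 0 < c)
    (h : ∀ y, c ≤ deriv (deriv f) y) (σ : ℝ) :
    Integrable (fun y => Real.exp (σ * y - f y)) ∧ ∃ K, ∀ y, Real.exp (σ * y - f y) ≤ K := by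
  obtain ⟨K, hK0, hK⟩ := gibbs_weight_le f hf c hc h σ
  have hfc := hf.continuous
  refine ⟨((integrable_exp_neg_mul_sq (b := c / 4) (by positivity)).const_mul K).mono'
    (by fun_prop) (ae_of_all _ fun y => ?_), K, fun y => (hK y).trans ?_⟩
  · rw [Real.norm_of_nonneg (Real.exp_pos _).le]; exact hK y
  · refine mul_le_of_le_one_right hK0 (Real.exp_le_one_iff.2 ?_)
    have : 0 ≤ c / 4 * y ^ 2 := by positivity
    linarith

lemma hasDerivAt_log_partition (f : ℝ → ℝ) (hf : Continuous f)
    (hint : ∀ σ : ℝ, Integrable (fun y => Real.exp (σ * y - f y))) (σ : ℝ) :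
    HasDerivAt (fun σ : ℝ => Real.log (∫ y : ℝ, Real.exp (-f y + σ * y))) (gibbsMean f σ) σ := by
  let μ : Measure ℝ := volume.withDensity fun y => ENNReal.ofReal (Real.exp (-f y))
  have hm : Measurable fun y => ENNReal.ofReal (Real.exp (-f y)) := by fun_prop
  have hI : ∀ F : ℝ → ℝ, ∫ y, F y ∂μ = ∫ y, Real.exp (-f y) * F y := fun F => by
    rw [integral_withDensity_eq_integral_toReal_smul hm (ae_of_all _ fun y => ENNReal.ofReal_lt_top)]
    refine integral_congr_ae (ae_of_all _ fun y => ?_)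
    simp [ENNReal.toReal_ofReal (Real.exp_pos _).le]
  have hset : ProbabilityTheory.integrableExpSet id μ = Set.univ := by
    refine Set.eq_univ_of_forall fun t => ?_
    change Integrable (fun y => Real.exp (t * id y)) μ
    rw [integrable_withDensity_iff_integrable_smul' hm (ae_of_all _ fun y => ENNReal.ofReal_lt_top)]
    refine (hint t).congr (ae_of_all _ fun y => ?_)
    simp only [ENNReal.toReal_ofReal (Real.exp_pos _).le, smul_eq_mul, id]
    rw [← Real.exp_add]; congr 1; ring
  have hmem : σ ∈ interior (ProbabilityTheory.integrableExpSet id μ) := by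
    rw [hset, interior_univ]; exact Set.mem_univ σ
  have hcgf : ProbabilityTheory.cgf id μ =
      fun σ : ℝ => Real.log (∫ y : ℝ, Real.exp (-f y + σ * y)) := by
    funext t
    simp only [ProbabilityTheory.cgf, ProbabilityTheory.mgf, hI, id, Real.exp_add]
  have hder := ProbabilityTheory.deriv_cgf hmem
  have hdiff := (ProbabilityTheory.analyticAt_cgf hmem).differentiableAt.hasDerivAt
  rw [hder, hcgf] at hdiff
  convert! hdiff using 1
  simp only [gibbsMean, ProbabilityTheory.mgf, hI, id]
  congr 1
  · refine integral_congr_ae (ae_of_all _ fun y => ?_)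
    simp only
    rw [mul_left_comm, ← Real.exp_add]; congr 2; ring
  · refine integral_congr_ae (ae_of_all _ fun y => ?_)
    simp only
    rw [← Real.exp_add]; congr 1; ring

/-- The local limit representation of the constrained partition function: the density at `0` of the
normalised sum equals, up to explicit factors, the integral over chains ending at `b`. -/
lemma log_density_zero (n : ℕ) (f : Fin (n + 1) → ℝ → ℝ) (hf : ∀ i, Continuous (f i)) (σ b : ℝ)
    (hint : ∀ i, Integrable (fun y => Real.exp (σ * y - f i y)))
    (hbdd : ∀ i, ∃ K, ∀ y, Real.exp (σ * y - f i y) ≤ K)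
    (m : Fin (n + 1) → ℝ) (hm : ∑ i, m i = b) (c : ℝ) (hc : 0 < c)
    (g : ℝ → ℝ) (hg : Continuous g)
    (hmap : Measure.map (fun x : Fin (n + 1) → ℝ => c * ∑ i, (x i - m i))
      (Measure.pi (fun i => gibbs (f i) σ)) =
      volume.withDensity fun t => ENNReal.ofReal (g t)) :
    0 < g 0 ∧ Real.log (g 0) = - Real.log c + σ * b
      - ∑ i, Real.log (∫ y, Real.exp (-f i y + σ * y))
      + Real.log (∫ u : Fin n → ℝ, Real.exp (-∑ i, f i (incr (n + 1) (Fin.snoc u b) i))) := by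
  have hcomm : ∀ i, ∫ y, Real.exp (-f i y + σ * y) = ∫ y, Real.exp (σ * y - f i y) := fun i => by
    congr 1; funext y; congr 1; ring
  simp only [hcomm]
  set Z : Fin (n + 1) → ℝ := fun i => ∫ y, Real.exp (σ * y - f i y) with hZ
  have hZpos : ∀ i, 0 < Z i := fun i => integral_exp_pos (hint i)
  choose K hK using hbdd
  have hKpos : ∀ i, 0 ≤ K i := fun i => (Real.exp_pos _).le.trans (hK i 0)
  let r : Fin (n + 1) → ℝ → ℝ := fun i y => (Z i)⁻¹ * Real.exp (σ * y - f i y)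
  have hrC : ∀ i y, r i y ≤ ∑ j, (Z j)⁻¹ * K j := fun i y =>
    (mul_le_mul_of_nonneg_left (hK i y) (inv_nonneg.2 (hZpos i).le)).trans
      (Finset.single_le_sum (f := fun j => (Z j)⁻¹ * K j)
        (fun j _ => mul_nonneg (inv_nonneg.2 (hZpos j).le) (hKpos j)) (Finset.mem_univ i))
  have hmap' : Measure.map (fun x : Fin (n + 1) → ℝ => c * (∑ i, x i - b))
      (Measure.pi (fun i => volume.withDensity fun y => ENNReal.ofReal (r i y))) =
      volume.withDensity fun t => ENNReal.ofReal (g t) := by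
    rw [← hmap]
    simp only [Finset.sum_sub_distrib, hm]
    rfl
  obtain ⟨hpos, h0⟩ := density_zero n r
    (fun i => by have := hf i; fun_prop)
    (fun i y => mul_pos (inv_pos.2 (hZpos i)) (Real.exp_pos _))
    (fun i => (hint i).const_mul _) _ hrC c b hc g hg hmap'
  have hfac : sumDensity n r b = ((∏ i, (Z i)⁻¹) * Real.exp (σ * b)) *
      ∫ u : Fin n → ℝ, Real.exp (-∑ i, f i (incr (n + 1) (Fin.snoc u b) i)) := by
    rw [sumDensity, ← integral_const_mul]
    refine integral_congr_ae (ae_of_all _ fun u => ?_)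
    simp only [r, Finset.prod_mul_distrib]
    rw [mul_assoc, ← Real.exp_sum, ← Real.exp_add, Finset.sum_sub_distrib, ← Finset.mul_sum,
      sum_incr, Fin.snoc_last]
    rfl
  have hprod : 0 < ∏ i, (Z i)⁻¹ := Finset.prod_pos fun i _ => inv_pos.2 (hZpos i)
  have hI : 0 < ∫ u : Fin n → ℝ, Real.exp (-∑ i, f i (incr (n + 1) (Fin.snoc u b) i)) := by
    rw [hfac] at hpos
    exact (mul_pos_iff_of_pos_left (mul_pos hprod (Real.exp_pos _))).1 hpos
  refine ⟨h0 ▸ mul_pos (inv_pos.2 hc) hpos, ?_⟩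
  rw [h0, hfac, Real.log_mul (inv_ne_zero hc.ne') (by positivity),
    Real.log_mul (by positivity) hI.ne', Real.log_mul hprod.ne' (Real.exp_pos _).ne', Real.log_exp,
    Real.log_inv, Real.log_prod (fun i _ => inv_ne_zero (hZpos i).ne')]
  simp only [Real.log_inv, Finset.sum_neg_distrib]
  ring

lemma bc_succ (n : ℕ) (b : ℝ) (u : Fin n → ℝ) (k : ℕ) (hk : k < n + 1) :
    bc (n + 1) b u (k + 1) = (Fin.snoc u b : Fin (n + 1) → ℝ) ⟨k, hk⟩ := by
  by_cases h : k < n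
  · have : (⟨k, hk⟩ : Fin (n + 1)) = Fin.castSucc ⟨k, h⟩ := rfl
    rw [this, Fin.snoc_castSucc]
    simp [bc, h]
  · have : (⟨k, hk⟩ : Fin (n + 1)) = Fin.last n := by ext; simp only [Fin.val_last]; omega
    rw [this, Fin.snoc_last]
    simp [bc, h]

lemma bc_sub (n : ℕ) (b : ℝ) (u : Fin n → ℝ) (i : Fin (n + 1)) :
    bc (n + 1) b u (i + 1) - bc (n + 1) b u i = incr (n + 1) (Fin.snoc u b) i := by
  obtain ⟨k, hk⟩ := i
  cases k with
  | zero => simp only [incr, dite_true, bc_succ n b u 0 hk]; simp [bc]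
  | succ k =>
    simp only [incr, bc_succ n b u (k + 1) hk, bc_succ n b u k (by omega)]
    simp

/-- A defect acting on `u₁` is a modification of the first bond potential, since `u₀ = 0`. -/
lemma freeEnergy_eq (ψ Q : ℝ → ℝ) (n : ℕ) (A : ℝ) (f : Fin (n + 1) → ℝ → ℝ)
    (hf0 : f 0 = fun z => ψ z + Q z) (hfs : ∀ i : Fin n, f i.succ = ψ) :
    freeEnergy (fun _ => ψ) Q (n + 1) A = - Real.log (∫ u : Fin n → ℝ,
      Real.exp (-∑ i, f i (incr (n + 1) (Fin.snoc u (((n + 1 : ℕ) : ℝ) * A)) i))) := by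
  unfold freeEnergy
  congr 2
  refine integral_congr_ae (ae_of_all _ fun u => ?_)
  change Real.exp _ = Real.exp _
  congr 1
  have h1 : bc (n + 1) (((n + 1 : ℕ) : ℝ) * A) u 1 =
      incr (n + 1) (Fin.snoc u (((n + 1 : ℕ) : ℝ) * A)) 0 := by
    rw [← bc_sub]; simp [bc]
  have h2 : chainE (fun _ => ψ) (n + 1) (((n + 1 : ℕ) : ℝ) * A) u =
      ∑ i, ψ (incr (n + 1) (Fin.snoc u (((n + 1 : ℕ) : ℝ) * A)) i) := by
    unfold chainE
    rw [Finset.sum_range]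
    exact Finset.sum_congr rfl fun i _ => by rw [← bc_sub]
  rw [h1, h2, Fin.sum_univ_succ, Fin.sum_univ_succ, hf0]
  simp only [hfs]
  ring

lemma ciSup_eq_of_max {φ : ℝ → ℝ} {σ : ℝ} (h : ∀ t, φ t ≤ φ σ) : ⨆ t, φ t = φ σ :=
  le_antisymm (ciSup_le h) (le_ciSup (f := φ) ⟨φ σ, by rintro _ ⟨t, rfl⟩; exact h t⟩ σ)

/-- `F_N^P(A) - F_N(A) = N [W_N^P(A) - W(A)] + log (g_{N,A}(0) / g^P_{N,A}(0))`. -/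
theorem free_energy_difference_identity
    (ψ P : ℝ → ℝ) (κ₁ κ₂ ς₁ ς₂ : ℝ)
    (hψ : ContDiff ℝ 2 ψ) (hP : ContDiff ℝ 2 P)
    (hκ₁ : 0 < κ₁) (hκ : κ₁ ≤ κ₂) (hς₁ : 0 < ς₁) (hς : ς₁ ≤ ς₂)
    (hψ'' : ∀ y : ℝ, κ₁ ≤ deriv (deriv ψ) y ∧ deriv (deriv ψ) y ≤ κ₂)
    (hψP'' : ∀ y : ℝ, ς₁ ≤ deriv (deriv (fun z => ψ z + P z)) y ∧
        deriv (deriv (fun z => ψ z + P z)) y ≤ ς₂)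
    (N : ℕ) (hN : 2 ≤ N) (A σ₀ σP : ℝ)
    (hσ₀ : ∀ σ : ℝ,
      σ * A - Real.log (∫ y : ℝ, Real.exp (-ψ y + σ * y)) ≤
      σ₀ * A - Real.log (∫ y : ℝ, Real.exp (-ψ y + σ₀ * y)))
    (hσP : ∀ σ : ℝ,
      σ * A - (N : ℝ)⁻¹ *
        (Real.log (∫ y : ℝ, Real.exp (-(ψ y + P y) + σ * y)) +
         ((N : ℝ) - 1) * Real.log (∫ y : ℝ, Real.exp (-ψ y + σ * y))) ≤
      σP * A - (N : ℝ)⁻¹ *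
        (Real.log (∫ y : ℝ, Real.exp (-(ψ y + P y) + σP * y)) +
         ((N : ℝ) - 1) * Real.log (∫ y : ℝ, Real.exp (-ψ y + σP * y))))
    (g gP : ℝ → ℝ) (hgcont : Continuous g) (hgPcont : Continuous gP)
    (hg : Measure.map
        (fun x : Fin N → ℝ => (Real.sqrt N)⁻¹ * ∑ i, (x i - gibbsMean ψ σ₀))
        (Measure.pi fun _ : Fin N => gibbs ψ σ₀)
      = volume.withDensity fun t => ENNReal.ofReal (g t))
    (hgP : Measure.map
        (fun x : Fin N → ℝ => (Real.sqrt N)⁻¹ * ∑ i,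
          (x i - if (i : ℕ) = 0 then gibbsMean (fun z => ψ z + P z) σP
                 else gibbsMean ψ σP))
        (Measure.pi fun i : Fin N =>
          if (i : ℕ) = 0 then gibbs (fun z => ψ z + P z) σP else gibbs ψ σP)
      = volume.withDensity fun t => ENNReal.ofReal (gP t)) :
    freeEnergy (fun _ => ψ) P N A - freeEnergy (fun _ => ψ) (fun _ => 0) N A =
      N * (WNP ψ P N A - W ψ A) + Real.log (g 0 / gP 0) := by
  obtain ⟨n, rfl⟩ : ∃ n, N = n + 1 := ⟨N - 1, by omega⟩
  have hψP : ContDiff ℝ 2 (fun z => ψ z + P z) := hψ.add hP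
  have Hψ := gibbs_weight_integrable_bdd ψ hψ κ₁ hκ₁ fun y => (hψ'' y).1
  have HψP := gibbs_weight_integrable_bdd _ hψP ς₁ hς₁ fun y => (hψP'' y).1
  have Dψ := hasDerivAt_log_partition ψ hψ.continuous fun σ => (Hψ σ).1
  have DψP := hasDerivAt_log_partition _ hψP.continuous fun σ => (HψP σ).1
  have hNpos : (0 : ℝ) < ((n + 1 : ℕ) : ℝ) := by positivity
  have hcpos : 0 < (Real.sqrt ((n + 1 : ℕ) : ℝ))⁻¹ := inv_pos.2 (Real.sqrt_pos.2 hNpos)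
  -- first-order optimality: the means under the tilted measures match the macroscopic strain
  have hm0 : gibbsMean ψ σ₀ = A := by
    have hd := ((hasDerivAt_id σ₀).mul_const A).sub (Dψ σ₀)
    have := IsLocalMax.hasDerivAt_eq_zero (Filter.Eventually.of_forall hσ₀) hd
    linarith
  have hmP : gibbsMean (fun z => ψ z + P z) σP + n * gibbsMean ψ σP = ((n + 1 : ℕ) : ℝ) * A := by
    have hd := ((hasDerivAt_id σP).mul_const A).sub (((DψP σP).add
      ((Dψ σP).const_mul (((n + 1 : ℕ) : ℝ) - 1))).const_mul (((n + 1 : ℕ) : ℝ)⁻¹))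
    have := IsLocalMax.hasDerivAt_eq_zero (Filter.Eventually.of_forall hσP) hd
    have hne := hNpos.ne'
    field_simp at this
    push_cast at this ⊢
    linarith
  let f : Fin (n + 1) → ℝ → ℝ := fun i => if (i : ℕ) = 0 then (fun z => ψ z + P z) else ψ
  have hf0 : f 0 = fun z => ψ z + P z := by simp [f]
  have hfs : ∀ i : Fin n, f i.succ = ψ := fun i => by simp [f]
  obtain ⟨g0, L0⟩ := log_density_zero n (fun _ => ψ) (fun _ => hψ.continuous) σ₀
    (((n + 1 : ℕ) : ℝ) * A) (fun _ => (Hψ σ₀).1) (fun _ => (Hψ σ₀).2) (fun _ => gibbsMean ψ σ₀)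
    (by simp [hm0]) _ hcpos g hgcont hg
  have hmeas : (fun i : Fin (n + 1) =>
      if (i : ℕ) = 0 then gibbs (fun z => ψ z + P z) σP else gibbs ψ σP) =
      fun i => gibbs (f i) σP := by
    funext i
    simp only [f]
    split_ifs <;> rfl
  obtain ⟨gP0, LP⟩ := log_density_zero n f
    (Fin.cases (hf0 ▸ hψP.continuous) fun i => (hfs i).symm ▸ hψ.continuous) σP
    (((n + 1 : ℕ) : ℝ) * A)
    (Fin.cases (by rw [hf0]; exact (HψP σP).1) fun i => by rw [hfs]; exact (Hψ σP).1)
    (Fin.cases (by rw [hf0]; exact (HψP σP).2) fun i => by rw [hfs]; exact (Hψ σP).2)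
    (fun i => if (i : ℕ) = 0 then gibbsMean (fun z => ψ z + P z) σP else gibbsMean ψ σP)
    (by rw [Fin.sum_univ_succ]; simpa using hmP)
    _ hcpos gP hgPcont (by rw [← hmeas]; exact hgP)
  have hW : W ψ A = _ := ciSup_eq_of_max hσ₀
  have hWP : WNP ψ P (n + 1) A = _ := ciSup_eq_of_max hσP
  rw [freeEnergy_eq ψ P n A f hf0 hfs,
    freeEnergy_eq ψ (fun _ => 0) n A (fun _ => ψ) (by simp) (fun _ => rfl),
    Real.log_div g0.ne' gP0.ne', L0, LP, hW, hWP, Fin.sum_univ_succ, Fin.sum_univ_succ, hf0]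
  simp only [hfs, Finset.sum_const, Finset.card_univ, Fintype.card_fin, nsmul_eq_mul]
  have hne := hNpos.ne'
  field_simp
  push_cast
  ring
end
end
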